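/- For every nonzero integer n, Σ_{n₁,n₂ ∈ ℤ∖{0}, n₁+n₂=n} σ₀(n₁) σ₀(n₂) ψ₁(n₁,n₂) = (11 − 3 log(4π²|n|)) σ₀(n), where for n = n₁+n₂, ψ₁(n₁,n₂) = 11 − 60 n₁ n₂/n² − ((3n₁³ − 27n₁²n₂ + 27n₁n₂² − 3n₂³)/n³) log|n₁/n₂|. -/

import Mathlib

open Filter
open scoped Real

noncomputable section

/-- The divisor function `σ_r(n) = Σ_{d ∣ |n|, d > 0} d^r` for a (nonzero) integer `n`. -/
def sigmaZ (r : ℕ) (n : ℤ) : ℕ := ∑ d ∈ n.natAbs.divisors, d ^ r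

/-- The weight `ψ₁(n₁,n₂)`, where `n = n₁ + n₂`. -/
def psi1 (n₁ n₂ : ℤ) : ℝ :=
  11 - 60 * (n₁ : ℝ) * (n₂ : ℝ) / ((n₁ : ℝ) + (n₂ : ℝ)) ^ 2
    - ((3 * (n₁ : ℝ) ^ 3 - 27 * (n₁ : ℝ) ^ 2 * (n₂ : ℝ) + 27 * (n₁ : ℝ) * (n₂ : ℝ) ^ 2
          - 3 * (n₂ : ℝ) ^ 3) / ((n₁ : ℝ) + (n₂ : ℝ)) ^ 3) *
        Real.log |(n₁ : ℝ) / (n₂ : ℝ)|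

/-!
The weight `ψ₁` is, up to the factor `-6`, the Legendre function `Q₃` at `(n₁ - n₂) / n`, and the
identity comes from integrating a vanishing Poincaré-type series of weight `8`.

For an integral matrix `m = (a, b; c, d)` of determinant `n` put `X = a·iy + b`, `Y = c·iy + d`. The
series `Σ_m X⁻⁴ Y⁻⁴` is the value at `iy` of a cusp form of weight `8` and level one, hence it is zero.
Here this is proved directly (`tsum_inv_pow_four`): a partial fraction identity in `X`, `Y`, `X + Y` is
summed over all `m`, and the substitutions `m ↦ γm` for unipotent `γ` turn it into the claim.

Separate the matrices with a zero entry from the others and multiply by `n⁴ y³`.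

* The matrices without zero entries correspond to pairs of factorizations `ad = n₁`, `bc = n₁ - n`, so
  over each `n₁` there are `2σ₀(n₁) · 2σ₀(n - n₁)` of them. In the variable `s = X / Y` the form
  `y³ X⁻⁴ Y⁻⁴ dy` becomes `n⁻⁷ (ds - b)³ (a - cs)³ s⁻⁴ ds`, which is integrated explicitly between
  `b/d` and `a/c`; the result is `-ψ₁(n₁, n - n₁) / (3n⁴)` (`integral_kernel`). The inequality
  `|X|² |Y|² ≥ (|ac| y² + |bd|)²` bounds the `L¹` norm of each term by `(abcd)⁻²`, which justifies
  integrating term by term (`hasSum_psi1`).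
* By the Lipschitz formula, the matrices with a zero entry contribute a finite sum over the
  factorizations of `n` of elementary functions of `y` (`generic_eq_degenerate`). Its integral over
  `(0, ∞)` is `Σ 4 (-11/6 + log 2π + log |a|)` over the divisors `a` of `n` of either sign
  (`integral_degenerate`).

Comparing the two integrals gives the theorem.
-/

/-! ### A vanishing series over matrices of determinant `n` -/

/-- Integral `2 × 2` matrices `(a, b; c, d)` of determinant `n`, encoded as `(a, b, c, d)`. -/
def DetMat (n : ℤ) : Type := {m : ℤ × ℤ × ℤ × ℤ // m.1 * m.2.2.2 - m.2.1 * m.2.2.1 = n}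

namespace DetMat

variable {n : ℤ}

def a (m : DetMat n) : ℤ := m.1.1
def b (m : DetMat n) : ℤ := m.1.2.1
def c (m : DetMat n) : ℤ := m.1.2.2.1
def d (m : DetMat n) : ℤ := m.1.2.2.2

lemma det (m : DetMat n) : m.a * m.d - m.b * m.c = n := m.2

def mk (a b c d : ℤ) (h : a * d - b * c = n) : DetMat n := ⟨(a, b, c, d), h⟩

@[simp] lemma mk_a (a b c d : ℤ) (h : a * d - b * c = n) : (mk a b c d h).a = a := rfl
@[simp] lemma mk_b (a b c d : ℤ) (h : a * d - b * c = n) : (mk a b c d h).b = b := rfl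
@[simp] lemma mk_c (a b c d : ℤ) (h : a * d - b * c = n) : (mk a b c d h).c = c := rfl
@[simp] lemma mk_d (a b c d : ℤ) (h : a * d - b * c = n) : (mk a b c d h).d = d := rfl

@[ext] lemma ext {m m' : DetMat n} (ha : m.a = m'.a) (hb : m.b = m'.b) (hc : m.c = m'.c)
    (hd : m.d = m'.d) : m = m' :=
  Subtype.ext (Prod.ext ha (Prod.ext hb (Prod.ext hc hd)))

instance : Countable (DetMat n) := inferInstanceAs (Countable {_m : ℤ × ℤ × ℤ × ℤ // _})

/-- Left multiplication by `(0, 1; -1, 0)`. -/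
def rot : DetMat n ≃ DetMat n where
  toFun m := mk m.c m.d (-m.a) (-m.b) (by linear_combination m.det)
  invFun m := mk (-m.c) (-m.d) m.a m.b (by linear_combination m.det)
  left_inv m := by ext <;> simp
  right_inv m := by ext <;> simp

/-- Left multiplication by `(1, 0; 1, 1)`. -/
def addTop : DetMat n ≃ DetMat n where
  toFun m := mk m.a m.b (m.c + m.a) (m.d + m.b) (by linear_combination m.det)
  invFun m := mk m.a m.b (m.c - m.a) (m.d - m.b) (by linear_combination m.det)
  left_inv m := by ext <;> simp
  right_inv m := by ext <;> simp

/-- Left multiplication by `(1, 1; 0, 1)`. -/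
def addBot : DetMat n ≃ DetMat n where
  toFun m := mk (m.a + m.c) (m.b + m.d) m.c m.d (by linear_combination m.det)
  invFun m := mk (m.a - m.c) (m.b - m.d) m.c m.d (by linear_combination m.det)
  left_inv m := by ext <;> simp
  right_inv m := by ext <;> simp

/-- Right multiplication by `(0, 1; -1, 0)`. -/
def flip : DetMat n ≃ DetMat n where
  toFun m := mk (-m.b) m.a (-m.d) m.c (by linear_combination m.det)
  invFun m := mk m.b (-m.a) m.d (-m.c) (by linear_combination m.det)
  left_inv m := by ext <;> simp
  right_inv m := by ext <;> simp

end DetMat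

/-- The linear form `a·(iy) + b`. -/
def lin (y : ℝ) (a b : ℤ) : ℂ := a * (Complex.I * y) + b

lemma lin_re (y : ℝ) (a b : ℤ) : (lin y a b).re = b := by simp [lin]

lemma lin_im (y : ℝ) (a b : ℤ) : (lin y a b).im = a * y := by simp [lin]

lemma norm_lin_sq (y : ℝ) (a b : ℤ) : ‖lin y a b‖ ^ 2 = (a * y) ^ 2 + (b : ℝ) ^ 2 := by
  rw [← Complex.normSq_eq_norm_sq, Complex.normSq_apply, lin_re, lin_im]; ring

lemma lin_add (y : ℝ) (a b c d : ℤ) : lin y (a + c) (b + d) = lin y a b + lin y c d := by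
  simp [lin]; ring

lemma lin_neg (y : ℝ) (a b : ℤ) : lin y (-a) (-b) = - lin y a b := by
  simp [lin]; ring

lemma lin_ne_zero {y : ℝ} (hy : 0 < y) {a b : ℤ} (h : a ≠ 0 ∨ b ≠ 0) : lin y a b ≠ 0 := by
  intro h0
  have h1 := lin_re y a b
  have h2 := lin_im y a b
  rw [h0] at h1 h2
  simp only [Complex.zero_re, Complex.zero_im] at h1 h2
  rcases h with h | h
  · have : (a : ℝ) * y ≠ 0 := mul_ne_zero (by exact_mod_cast h) hy.ne'
    exact this h2.symm
  · exact h (by exact_mod_cast h1.symm)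

lemma le_norm_lin_sq (y : ℝ) (a b : ℤ) :
    min 1 (y ^ 2) * ((a : ℝ) ^ 2 + (b : ℝ) ^ 2) ≤ ‖lin y a b‖ ^ 2 := by
  rw [norm_lin_sq]
  nlinarith [min_le_left 1 (y ^ 2), min_le_right 1 (y ^ 2), sq_nonneg (a : ℝ), sq_nonneg (b : ℝ),
    mul_le_mul_of_nonneg_right (min_le_left 1 (y ^ 2)) (sq_nonneg (b : ℝ)),
    mul_le_mul_of_nonneg_right (min_le_right 1 (y ^ 2)) (sq_nonneg (a : ℝ))]

namespace DetMat

variable {n : ℤ}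

/-- First row of `m` applied to `(iy, 1)`. -/
def X (m : DetMat n) (y : ℝ) : ℂ := lin y m.a m.b
/-- Second row of `m` applied to `(iy, 1)`. -/
def Y (m : DetMat n) (y : ℝ) : ℂ := lin y m.c m.d

lemma top_ne (hn : n ≠ 0) (m : DetMat n) : m.a ≠ 0 ∨ m.b ≠ 0 := by
  by_contra! h
  exact hn (by rw [← m.det, h.1, h.2]; ring)

lemma bot_ne (hn : n ≠ 0) (m : DetMat n) : m.c ≠ 0 ∨ m.d ≠ 0 := by
  by_contra! h
  exact hn (by rw [← m.det, h.1, h.2]; ring)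

lemma X_ne (hn : n ≠ 0) (m : DetMat n) {y : ℝ} (hy : 0 < y) : m.X y ≠ 0 :=
  lin_ne_zero hy (m.top_ne hn)

lemma Y_ne (hn : n ≠ 0) (m : DetMat n) {y : ℝ} (hy : 0 < y) : m.Y y ≠ 0 :=
  lin_ne_zero hy (m.bot_ne hn)

@[simp] lemma X_rot (m : DetMat n) (y : ℝ) : (rot m).X y = m.Y y := rfl
@[simp] lemma Y_rot (m : DetMat n) (y : ℝ) : (rot m).Y y = - m.X y := lin_neg _ _ _
@[simp] lemma X_addTop (m : DetMat n) (y : ℝ) : (addTop m).X y = m.X y := rfl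
@[simp] lemma Y_addTop (m : DetMat n) (y : ℝ) : (addTop m).Y y = m.Y y + m.X y := lin_add _ _ _ _ _
@[simp] lemma X_addBot (m : DetMat n) (y : ℝ) : (addBot m).X y = m.X y + m.Y y := lin_add _ _ _ _ _
@[simp] lemma Y_addBot (m : DetMat n) (y : ℝ) : (addBot m).Y y = m.Y y := rfl

end DetMat

lemma summable_inv_one_add_sq : Summable fun t : ℤ => (1 + (t : ℝ) ^ 2)⁻¹ := by
  have h : Summable fun t : ℤ => 1 / (t : ℝ) ^ 2 := Real.summable_one_div_int_pow.2 (by norm_num)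
  refine Summable.of_norm_bounded_eventually h ?_
  filter_upwards [eventually_cofinite_ne (0 : ℤ)] with t ht
  have : 0 < (t : ℝ) ^ 2 := by positivity
  rw [Real.norm_of_nonneg (by positivity), one_div]
  gcongr
  linarith

/-- A matrix of nonzero determinant is determined by its bottom row and one suitable entry
of its top row, so convergence can be tested on `ℤ³`. -/
def DetMat.code {n : ℤ} (m : DetMat n) : ℤ × ℤ × ℤ := (if m.d = 0 then m.a else m.b, m.c, m.d)

lemma DetMat.code_injective {n : ℤ} (hn : n ≠ 0) : Function.Injective (DetMat.code (n := n)) := by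
  intro m m' h
  simp only [code, Prod.mk.injEq] at h
  obtain ⟨h1, hc, hd⟩ := h
  have e1 := m.det
  have e2 := m'.det
  rw [← hd] at h1 e2
  rw [← hc] at e2
  by_cases h0 : m.d = 0
  · simp only [h0, if_true] at h1
    have hc0 : m.c ≠ 0 := (m.bot_ne hn).resolve_right (by simp [h0])
    refine DetMat.ext h1 ?_ hc hd
    apply mul_right_cancel₀ hc0
    rw [h0] at e1 e2
    linarith
  · simp only [h0, if_false] at h1
    refine DetMat.ext ?_ h1 hc hd
    apply mul_right_cancel₀ h0
    rw [← h1] at e2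
    linarith

lemma one_le_sq_add_sq {a b : ℤ} (h : a ≠ 0 ∨ b ≠ 0) : (1 : ℝ) ≤ (a : ℝ) ^ 2 + (b : ℝ) ^ 2 := by
  have : (1 : ℤ) ≤ a ^ 2 + b ^ 2 := by
    rcases h with h | h
    · have := Int.one_le_abs h
      nlinarith [sq_abs a, sq_nonneg b, abs_nonneg a]
    · have := Int.one_le_abs h
      nlinarith [sq_abs b, sq_nonneg a, abs_nonneg b]
  exact_mod_cast this

/-- For `n ≠ 0` both rows are nonzero, so `‖Y‖⁻⁶` controls the sums over `c` and `d`, and `‖X‖⁻²` the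
sum over the single remaining entry of the top row. -/
lemma summable_two_six {n : ℤ} (hn : n ≠ 0) {y : ℝ} (hy : 0 < y) :
    Summable fun m : DetMat n => ‖m.X y‖⁻¹ ^ 2 * ‖m.Y y‖⁻¹ ^ 6 := by
  set k : ℝ := min 1 (y ^ 2) with hk
  have hk0 : 0 < k := by positivity
  have s := summable_inv_one_add_sq
  have s3 : Summable fun p : ℤ × ℤ × ℤ =>
      (1 + (p.1 : ℝ) ^ 2)⁻¹ * ((1 + (p.2.1 : ℝ) ^ 2)⁻¹ * (1 + (p.2.2 : ℝ) ^ 2)⁻¹) := by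
    have s2 : Summable fun p : ℤ × ℤ => (1 + (p.1 : ℝ) ^ 2)⁻¹ * (1 + (p.2 : ℝ) ^ 2)⁻¹ :=
      s.mul_of_nonneg s (fun _ => by positivity) (fun _ => by positivity)
    exact s.mul_of_nonneg s2 (fun _ => by positivity) (fun _ => by positivity)
  have s4 := (s3.comp_injective (DetMat.code_injective hn)).mul_left (8 * k⁻¹ ^ 4)
  refine Summable.of_nonneg_of_le (fun m => by positivity) (fun m => ?_) s4
  have hX := le_norm_lin_sq y m.a m.b
  have hY := le_norm_lin_sq y m.c m.d
  have hP := one_le_sq_add_sq (m.top_ne hn)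
  have hQ := one_le_sq_add_sq (m.bot_ne hn)
  rw [← hk] at hX hY
  change k * _ ≤ ‖m.X y‖ ^ 2 at hX
  change k * _ ≤ ‖m.Y y‖ ^ 2 at hY
  set P : ℝ := (m.a : ℝ) ^ 2 + (m.b : ℝ) ^ 2
  set Q : ℝ := (m.c : ℝ) ^ 2 + (m.d : ℝ) ^ 2 with hQd
  simp only [Function.comp, DetMat.code]
  set e : ℤ := if m.d = 0 then m.a else m.b with he
  have hPe : (1 + (e : ℝ) ^ 2) / 2 ≤ P := by
    have : (e : ℝ) ^ 2 ≤ P := by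
      rw [he]; split_ifs
      · nlinarith [sq_nonneg (m.b : ℝ)]
      · nlinarith [sq_nonneg (m.a : ℝ)]
    linarith
  have hQe : (1 + (m.c : ℝ) ^ 2) * (1 + (m.d : ℝ) ^ 2) / 4 ≤ Q ^ 3 := by
    have h2 : (1 + (m.c : ℝ) ^ 2) * (1 + (m.d : ℝ) ^ 2) / 4 ≤ Q ^ 2 := by
      nlinarith [sq_nonneg ((m.c : ℝ) ^ 2), sq_nonneg ((m.d : ℝ) ^ 2),
        mul_nonneg (sq_nonneg (m.c : ℝ)) (sq_nonneg (m.d : ℝ))]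
    nlinarith [sq_nonneg Q]
  have h1 : ‖m.X y‖⁻¹ ^ 2 ≤ (k * ((1 + (e : ℝ) ^ 2) / 2))⁻¹ := by
    rw [inv_pow]
    refine inv_anti₀ (by positivity) (le_trans ?_ hX)
    gcongr
  have h2 : ‖m.Y y‖⁻¹ ^ 6 ≤ (k ^ 3 * ((1 + (m.c : ℝ) ^ 2) * (1 + (m.d : ℝ) ^ 2) / 4))⁻¹ := by
    rw [inv_pow]
    refine inv_anti₀ (by positivity) ?_
    calc _ ≤ k ^ 3 * Q ^ 3 := by gcongr
      _ = (k * Q) ^ 3 := by ring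
      _ ≤ (‖m.Y y‖ ^ 2) ^ 3 := by gcongr
      _ = _ := by ring
  calc _ ≤ _ := mul_le_mul h1 h2 (by positivity) (by positivity)
    _ = _ := by field_simp; ring

lemma summable_six_two {n : ℤ} (hn : n ≠ 0) {y : ℝ} (hy : 0 < y) :
    Summable fun m : DetMat n => ‖m.X y‖⁻¹ ^ 6 * ‖m.Y y‖⁻¹ ^ 2 := by
  have := (DetMat.rot (n := n)).summable_iff.2 (summable_two_six hn hy)
  refine this.congr fun m => ?_
  simp [Function.comp, mul_comm]

lemma summable_inv_pow {n : ℤ} (hn : n ≠ 0) {y : ℝ} (hy : 0 < y) {i j : ℕ} (hij : i + j = 4) :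
    Summable fun m : DetMat n => ((m.X y)⁻¹ ^ (2 + i) * (m.Y y)⁻¹ ^ (2 + j)) := by
  refine Summable.of_norm_bounded ((summable_two_six hn hy).add (summable_six_two hn hy))
    fun m => ?_
  rw [norm_mul, norm_pow, norm_pow, norm_inv, norm_inv]
  set u := ‖m.X y‖⁻¹
  set v := ‖m.Y y‖⁻¹
  have hu : 0 ≤ u := by positivity
  have hv : 0 ≤ v := by positivity
  have key : u ^ i * v ^ j ≤ u ^ 4 + v ^ 4 := by
    rcases le_total u v with h | h
    · calc u ^ i * v ^ j ≤ v ^ i * v ^ j := by gcongr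
        _ = v ^ 4 := by rw [← pow_add, hij]
        _ ≤ _ := by linarith [pow_nonneg hu 4]
    · calc u ^ i * v ^ j ≤ u ^ i * u ^ j := by gcongr
        _ = u ^ 4 := by rw [← pow_add, hij]
        _ ≤ _ := by linarith [pow_nonneg hv 4]
  calc _ = (u ^ 2 * v ^ 2) * (u ^ i * v ^ j) := by ring
    _ ≤ (u ^ 2 * v ^ 2) * (u ^ 4 + v ^ 4) := by gcongr
    _ = _ := by ring

/-- A partial fraction identity of degree `-8` in which every exponent is at least `2`, so that each
term can be summed absolutely over all matrices of determinant `n`. -/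
lemma partial_fractions {x y : ℂ} (hx : x ≠ 0) (hy : y ≠ 0) (hxy : x + y ≠ 0) :
    5 * (x⁻¹ ^ 2 * y⁻¹ ^ 6) - 2 * (x⁻¹ ^ 3 * y⁻¹ ^ 5) =
      -5 * (x⁻¹ ^ 2 * (y + x)⁻¹ ^ 6) - 2 * (x⁻¹ ^ 3 * (y + x)⁻¹ ^ 5)
      + 5 * ((x + y)⁻¹ ^ 6 * y⁻¹ ^ 2) + 8 * ((x + y)⁻¹ ^ 5 * y⁻¹ ^ 3)
      + 9 * ((x + y)⁻¹ ^ 4 * y⁻¹ ^ 4) + 8 * ((x + y)⁻¹ ^ 3 * y⁻¹ ^ 5)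
      + 5 * ((x + y)⁻¹ ^ 2 * y⁻¹ ^ 6) := by
  rw [add_comm y x]
  field_simp
  ring

/-- The vanishing reflects the absence of cusp forms of weight `8` and level one. Write `S i j` for
the sum of `X⁻ⁱ Y⁻ʲ`. Summing `partial_fractions`, where the shears permute the matrices, and using
`S 6 2 = S 2 6`, `S 5 3 = -S 3 5` (from `rot`) leaves `9 * S 4 4 = 0`. -/
lemma tsum_inv_pow_four {n : ℤ} (hn : n ≠ 0) {y : ℝ} (hy : 0 < y) :
    ∑' m : DetMat n, ((m.X y)⁻¹ ^ 4 * (m.Y y)⁻¹ ^ 4) = 0 := by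
  let f (i j : ℕ) (m : DetMat n) : ℂ := (m.X y)⁻¹ ^ i * (m.Y y)⁻¹ ^ j
  have h26 : Summable (f 2 6) := summable_inv_pow hn hy (i := 0) (j := 4) rfl
  have h35 : Summable (f 3 5) := summable_inv_pow hn hy (i := 1) (j := 3) rfl
  have h44 : Summable (f 4 4) := summable_inv_pow hn hy (i := 2) (j := 2) rfl
  have h53 : Summable (f 5 3) := summable_inv_pow hn hy (i := 3) (j := 1) rfl
  have h62 : Summable (f 6 2) := summable_inv_pow hn hy (i := 4) (j := 0) rfl
  obtain ⟨u, hu⟩ := h26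
  obtain ⟨v, hv⟩ := h35
  obtain ⟨w, hw⟩ := h44
  have hu' : HasSum (f 6 2) u := by
    refine ((DetMat.rot (n := n)).hasSum_iff.2 hu).congr_fun fun m => ?_
    simp [f, Even.neg_pow (show Even 6 by decide), mul_comm]
  have hv' : HasSum (f 5 3) (-v) := by
    refine ((DetMat.rot (n := n)).hasSum_iff.2 hv).neg.congr_fun fun m => ?_
    simp [f, inv_neg, Odd.neg_pow (show Odd 5 by decide), mul_comm]
  have top {i j : ℕ} {s : ℂ} (h : HasSum (f i j) s) : HasSum (f i j ∘ DetMat.addTop) s :=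
    (DetMat.addTop (n := n)).hasSum_iff.2 h
  have bot {i j : ℕ} {s : ℂ} (h : HasSum (f i j) s) : HasSum (f i j ∘ DetMat.addBot) s :=
    (DetMat.addBot (n := n)).hasSum_iff.2 h
  have L := (hu.mul_left 5).sub (hv.mul_left 2)
  have R := ((((((top hu).mul_left (-5)).sub ((top hv).mul_left 2)).add
    ((bot hu').mul_left 5)).add ((bot hv').mul_left 8)).add ((bot hw).mul_left 9)).add
    ((bot hv).mul_left 8) |>.add ((bot hu).mul_left 5)
  have e := L.unique (R.congr_fun fun m => ?_)
  · have : w = 0 := by linear_combination (-1 / 9 : ℂ) * e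
    rw [← this]
    exact hw.tsum_eq
  · have := partial_fractions (m.X_ne hn hy) (m.Y_ne hn hy)
      (by simpa using (DetMat.addBot m).X_ne hn hy)
    simpa [f] using this

/-! ### The contribution of the matrices with a zero entry -/

/-- The weight-`8` summand attached to a matrix. -/
def DetMat.term {n : ℤ} (m : DetMat n) (y : ℝ) : ℂ := (m.X y)⁻¹ ^ 4 * (m.Y y)⁻¹ ^ 4

namespace DetMat

variable {n : ℤ}

lemma summable_term (hn : n ≠ 0) {y : ℝ} (hy : 0 < y) :
    Summable fun m : DetMat n => m.term y :=
  summable_inv_pow hn hy (i := 2) (j := 2) rfl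

lemma term_rot (m : DetMat n) (y : ℝ) : (rot m).term y = m.term y := by
  simp [term, Even.neg_pow (show Even 4 by decide), mul_comm]

lemma term_flip (m : DetMat n) {y : ℝ} (hy : 0 < y) :
    m.term y = (y : ℂ)⁻¹ ^ 8 * (flip m).term y⁻¹ := by
  have hy' : (y : ℂ) ≠ 0 := by exact_mod_cast hy.ne'
  have key (a b : ℤ) : lin y a b = Complex.I * y * lin y⁻¹ (-b) a := by
    simp only [lin]; push_cast; field_simp; linear_combination (b : ℂ) * Complex.I_sq
  have h4 : Complex.I⁻¹ ^ 4 = 1 := by rw [inv_pow, Complex.I_pow_four, inv_one]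
  change (lin y m.a m.b)⁻¹ ^ 4 * (lin y m.c m.d)⁻¹ ^ 4
    = _ * ((lin y⁻¹ (-m.b) m.a)⁻¹ ^ 4 * (lin y⁻¹ (-m.d) m.c)⁻¹ ^ 4)
  rw [key m.a, key m.c]
  simp only [mul_inv, mul_pow, h4]
  ring

lemma summable_ite (hn : n ≠ 0) {y : ℝ} (hy : 0 < y) (p : DetMat n → Prop) [DecidablePred p] :
    Summable fun m : DetMat n => if p m then m.term y else 0 := by
  refine Summable.of_norm_bounded (summable_term hn hy).norm fun m => ?_
  split_ifs <;> simp

/-- Contribution of the matrices with `c = 0`. -/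
def lowerZero (n : ℤ) (y : ℝ) : ℂ := ∑' m : DetMat n, if m.c = 0 then m.term y else 0

/-- Contribution of the diagonal matrices. -/
def diagSum (n : ℤ) (y : ℝ) : ℂ :=
  ∑' m : DetMat n, if m.b = 0 ∧ m.c = 0 then m.term y else 0

/-- Contribution of the matrices with no zero entry. -/
def generic (n : ℤ) (y : ℝ) : ℂ :=
  ∑' m : DetMat n, if m.a ≠ 0 ∧ m.b ≠ 0 ∧ m.c ≠ 0 ∧ m.d ≠ 0 then m.term y else 0

lemma tsum_d_zero {y : ℝ} (hy : 0 < y) :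
    (∑' m : DetMat n, if m.d = 0 then m.term y else 0) = (y : ℂ)⁻¹ ^ 8 * lowerZero n y⁻¹ := by
  rw [lowerZero, ← (flip (n := n)).tsum_eq (fun m => if m.c = 0 then m.term y⁻¹ else 0),
    ← tsum_mul_left]
  refine tsum_congr fun m => ?_
  have : (flip m).c = 0 ↔ m.d = 0 := by simp [flip]
  simp only [this]
  split_ifs
  · exact term_flip m hy
  · simp

/-- Inclusion–exclusion over the vanishing entries: since `n ≠ 0`, two entries can vanish together only
if both lie on one of the two diagonals, and the total over all matrices is zero. -/
lemma generic_eq (hn : n ≠ 0) {y : ℝ} (hy : 0 < y) :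
    generic n y = -2 * lowerZero n y - 2 * ((y : ℂ)⁻¹ ^ 8 * lowerZero n y⁻¹) + 2 * diagSum n y := by
  have hc := (summable_ite hn hy (fun m => m.c = 0)).hasSum
  have hd := (summable_ite hn hy (fun m => m.d = 0)).hasSum
  rw [tsum_d_zero hy] at hd
  have hbc := (summable_ite hn hy (fun m => m.b = 0 ∧ m.c = 0)).hasSum
  have hg := (summable_ite hn hy
    (fun m => m.a ≠ 0 ∧ m.b ≠ 0 ∧ m.c ≠ 0 ∧ m.d ≠ 0)).hasSum
  have ha := (rot (n := n)).hasSum_iff.2 hc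
  have hb := (rot (n := n)).hasSum_iff.2 hd
  have had := (rot (n := n)).hasSum_iff.2 hbc
  have ht := (summable_term hn hy).hasSum
  have h0 : ∑' m : DetMat n, m.term y = 0 := tsum_inv_pow_four hn hy
  rw [h0] at ht
  have e := ht.unique ((((((hg.add ha).add hb).add hc).add hd).sub hbc).sub had |>.congr_fun
    fun m => ?_)
  · simp only [generic, lowerZero, diagSum] at e ⊢
    linear_combination -e
  · have r1 : (rot m).c = 0 ↔ m.a = 0 := by simp [rot]
    have r2 : (rot m).d = 0 ↔ m.b = 0 := by simp [rot]
    have r3 : (rot m).b = 0 ↔ m.d = 0 := by simp [rot]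
    simp only [Function.comp, r1, r2, r3, term_rot]
    have ht := m.top_ne hn
    have hb := m.bot_ne hn
    have hdet := m.det
    by_cases h1 : m.a = 0 <;> by_cases h2 : m.b = 0 <;> by_cases h3 : m.c = 0 <;>
      by_cases h4 : m.d = 0 <;> simp_all

lemma mem_dA {p : ℤ × ℤ} (p' : p ∈ Int.divisorsAntidiag n) : p.1 * p.2 = n ∧ p.1 ≠ 0 ∧ p.2 ≠ 0 := by
  obtain ⟨h, hn⟩ := Int.mem_divisorsAntidiag.1 p'
  refine ⟨h, ?_, ?_⟩ <;> rintro h0 <;> simp [h0] at h <;> exact hn h.symm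

/-- Upper triangular matrices, parametrised by the diagonal and the upper right entry. -/
def upper (p : {p // p ∈ Int.divisorsAntidiag n} × ℤ) : DetMat n :=
  mk p.1.1.1 p.2 0 p.1.1.2 (by linear_combination (mem_dA p.1.2).1)

lemma upper_injective : Function.Injective (upper (n := n)) := by
  rintro ⟨⟨⟨a, d⟩, h⟩, b⟩ ⟨⟨⟨a', d'⟩, h'⟩, b'⟩ e
  have e1 := congrArg DetMat.a e
  have e2 := congrArg DetMat.b e
  have e3 := congrArg DetMat.d e
  simp only [upper, mk_a, mk_b, mk_d] at e1 e2 e3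
  subst e1 e2 e3
  rfl

lemma mem_range_upper (hn : n ≠ 0) {m : DetMat n} (h : m.c = 0) : m ∈ Set.range upper := by
  have hdet := m.det
  rw [h] at hdet
  refine ⟨⟨⟨(m.a, m.d), Int.mem_divisorsAntidiag.2 ⟨by linarith, hn⟩⟩, m.b⟩, ?_⟩
  ext <;> simp [upper, h]

lemma lowerZero_eq (hn : n ≠ 0) {y : ℝ} (hy : 0 < y) :
    lowerZero n y = ∑ p ∈ Int.divisorsAntidiag n,
      (p.2 : ℂ)⁻¹ ^ 4 * ∑' b : ℤ, (lin y p.1 b)⁻¹ ^ 4 := by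
  have hs := (summable_ite hn hy (fun m => m.c = 0)).comp_injective (upper_injective (n := n))
  have h1 : lowerZero n y
      = ∑' q : {p // p ∈ Int.divisorsAntidiag n} × ℤ, (q.1.1.2 : ℂ)⁻¹ ^ 4 * (lin y q.1.1.1 q.2)⁻¹ ^ 4 := by
    rw [lowerZero, ← (upper_injective (n := n)).tsum_eq]
    · refine tsum_congr fun q => ?_
      simp [upper, term, X, Y, lin, mul_comm]
    · intro m hm
      refine mem_range_upper hn ?_
      by_contra h
      simp [h] at hm
  have hs' : Summable fun q : {p // p ∈ Int.divisorsAntidiag n} × ℤ =>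
      (q.1.1.2 : ℂ)⁻¹ ^ 4 * (lin y q.1.1.1 q.2)⁻¹ ^ 4 := by
    refine hs.congr fun q => ?_
    simp [upper, term, X, Y, lin, mul_comm]
  rw [h1, hs'.tsum_prod, tsum_fintype, ← Finset.sum_coe_sort (Int.divisorsAntidiag n)
    (fun p => (p.2 : ℂ)⁻¹ ^ 4 * ∑' b : ℤ, (lin y p.1 b)⁻¹ ^ 4)]
  refine Finset.sum_congr rfl fun p _ => ?_
  exact tsum_mul_left (a := (p.1.2 : ℂ)⁻¹ ^ 4) (f := fun b : ℤ => (lin y p.1.1 b)⁻¹ ^ 4)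

lemma diagSum_eq (hn : n ≠ 0) (y : ℝ) :
    diagSum n y = (Int.divisorsAntidiag n).card * ((n : ℂ)⁻¹ ^ 4 * (y : ℂ)⁻¹ ^ 4) := by
  have hinj : Function.Injective fun p : {p // p ∈ Int.divisorsAntidiag n} => upper (p, 0) :=
    upper_injective.comp fun p q h => congrArg Prod.fst h
  rw [diagSum, ← hinj.tsum_eq (f := fun m : DetMat n => if m.b = 0 ∧ m.c = 0 then m.term y else 0),
    tsum_fintype]
  · trans ∑ _p : {p // p ∈ Int.divisorsAntidiag n}, ((n : ℂ)⁻¹ ^ 4 * (y : ℂ)⁻¹ ^ 4)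
    · refine Finset.sum_congr rfl fun p _ => ?_
      have h := (mem_dA p.2).1
      have h' : (n : ℂ) = (p.1.1 : ℂ) * p.1.2 := by exact_mod_cast h.symm
      have h4 : Complex.I⁻¹ ^ 4 = 1 := by rw [inv_pow, Complex.I_pow_four, inv_one]
      simp only [upper, term, X, Y, lin, h', mk_a, mk_b, mk_c, mk_d, and_self, if_true,
        Int.cast_zero, add_zero, zero_mul, zero_add, mul_inv, mul_pow, h4]
      ring
    · simp
  · intro m hm
    have hm' : m.b = 0 ∧ m.c = 0 := by
      by_contra h
      simp [h] at hm
    obtain ⟨q, hq⟩ := mem_range_upper hn hm'.2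
    refine ⟨q.1, ?_⟩
    rw [← hq]
    have : q.2 = 0 := by rw [← hm'.1, ← hq]; simp [upper]
    ext <;> simp [upper, this]

end DetMat

/-- Proved by expanding `k³` in the basis `(k+3 choose 3), (k+2 choose 2), (k+1 choose 1), 1`. -/
lemma tsum_cube_geometric {r : ℝ} (h0 : 0 ≤ r) (h1 : r < 1) :
    HasSum (fun k : ℕ => (k : ℝ) ^ 3 * r ^ k) (r * (1 + 4 * r + r ^ 2) / (1 - r) ^ 4) := by
  have hr : ‖r‖ < 1 := by rwa [Real.norm_of_nonneg h0]
  have b3 := (hasSum_choose_mul_geometric_of_norm_lt_one 3 hr).mul_left 6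
  have b2 := (hasSum_choose_mul_geometric_of_norm_lt_one 2 hr).mul_left 12
  have b1 := (hasSum_choose_mul_geometric_of_norm_lt_one 1 hr).mul_left 7
  have b0 := hasSum_geometric_of_lt_one h0 h1
  have h := ((b3.sub b2).add b1).sub b0
  have hne : 1 - r ≠ 0 := by linarith
  convert! h using 1
  · funext k
    have c3 : ((k + 3).choose 3 : ℝ) = (k + 3) * (k + 2) * (k + 1) / 6 := by
      rw [Nat.cast_choose_eq_descPochhammer_div]
      simp [descPochhammer_succ_right, Nat.factorial]; ring
    have c2 : ((k + 2).choose 2 : ℝ) = (k + 2) * (k + 1) / 2 := by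
      rw [Nat.cast_choose_two]
      push_cast; ring
    rw [c3, c2, Nat.choose_one_right]
    push_cast; ring
  · field_simp; ring

/-- `phi t = Σ_{b ∈ ℤ} (it + b)⁻⁴` in closed form, for `t ≠ 0`. -/
def phi (t : ℝ) : ℝ :=
  8 / 3 * π ^ 4 * (Real.exp (-(2 * π * |t|)) * (1 + 4 * Real.exp (-(2 * π * |t|))
    + Real.exp (-(2 * π * |t|)) ^ 2) / (1 - Real.exp (-(2 * π * |t|))) ^ 4)

lemma tsum_lattice_of_pos {t : ℝ} (ht : 0 < t) :
    ∑' b : ℤ, (Complex.I * t + b)⁻¹ ^ 4 = phi t := by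
  have hz : 0 < (Complex.I * t).im := by simpa using ht
  have h := EisensteinSeries.qExpansion_identity (k := 3) (by norm_num) ⟨Complex.I * t, hz⟩
  have hq : Complex.exp (2 * π * Complex.I * (Complex.I * t))
      = ((Real.exp (-(2 * π * t)) : ℝ) : ℂ) := by
    rw [Complex.ofReal_exp]
    congr 1
    push_cast
    linear_combination (2 * π * t : ℂ) * Complex.I_sq
  have hlt : Real.exp (-(2 * π * t)) < 1 := by
    rw [Real.exp_lt_one_iff]
    have := Real.pi_pos
    have : 0 < 2 * π * t := by positivity
    linarith
  have hs := (tsum_cube_geometric (Real.exp_nonneg _) hlt)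
  have hs' := (Complex.hasSum_ofReal.2 hs).tsum_eq
  push_cast at hs'
  simp only [hq] at h
  simp only [one_div, ← inv_pow] at h
  push_cast at h
  rw [hs'] at h
  rw [h, phi, abs_of_pos ht]
  have h4 : (-2 * (π : ℂ) * Complex.I) ^ 4 = 16 * π ^ 4 := by
    rw [mul_pow, mul_pow, Complex.I_pow_four]; norm_num
  rw [h4]
  push_cast
  simp only [Nat.factorial]
  push_cast
  ring

/-- The Lipschitz summation formula in weight `4` along a row with first entry `a ≠ 0`. -/
lemma tsum_lin {y : ℝ} (hy : 0 < y) {a : ℤ} (ha : a ≠ 0) :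
    ∑' b : ℤ, (lin y a b)⁻¹ ^ 4 = phi (a * y) := by
  rcases lt_or_gt_of_ne ha with h | h
  · have ht : (0 : ℝ) < -a * y := by
      have : (a : ℝ) < 0 := by exact_mod_cast h
      nlinarith
    have e : phi (a * y) = phi (-a * y) := by simp [phi, abs_mul]
    rw [e, ← tsum_lattice_of_pos ht, ← (Equiv.neg ℤ).tsum_eq]
    refine tsum_congr fun b => ?_
    rw [inv_pow, inv_pow, ← Even.neg_pow (show Even 4 by decide) (lin y a _)]
    simp [lin]; ring
  · have ht : (0 : ℝ) < a * y := by
      have : (0 : ℝ) < a := by exact_mod_cast h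
      positivity
    rw [← tsum_lattice_of_pos ht]
    refine tsum_congr fun b => ?_
    simp [lin]; ring

/-! ### Integration of the degenerate part -/

section

open Topology

/-- An antiderivative of `t ^ 3 * phi t` on the positive reals, vanishing at infinity. The quotients
`t / (1 - exp (-2πt))` are kept together because they stay bounded as `t → 0`. -/
def Phi (t : ℝ) : ℝ :=
  Real.log (1 - Real.exp (-(2 * π * t))) - 1 / 6 *
    (8 * π ^ 3 * (t / (1 - Real.exp (-(2 * π * t)))) ^ 3
        * (Real.exp (-(2 * π * t)) * (1 + Real.exp (-(2 * π * t))))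
      + 12 * π ^ 2 * (t / (1 - Real.exp (-(2 * π * t)))) ^ 2 * Real.exp (-(2 * π * t))
      + 12 * π * (t / (1 - Real.exp (-(2 * π * t)))) * Real.exp (-(2 * π * t)))

lemma exp_lt_one_of_pos {t : ℝ} (ht : 0 < t) : Real.exp (-(2 * π * t)) < 1 := by
  rw [Real.exp_lt_one_iff]
  have := Real.pi_pos
  have : 0 < 2 * π * t := by positivity
  linarith

lemma hasDerivAt_E (t : ℝ) : HasDerivAt (fun t : ℝ => Real.exp (-(2 * π * t)))
    (-(2 * π) * Real.exp (-(2 * π * t))) t := by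
  have h := (((hasDerivAt_id t).const_mul (2 * π)).neg).exp
  convert! h using 1
  simp; ring

lemma hasDerivAt_Phi {t : ℝ} (ht : 0 < t) : HasDerivAt Phi (t ^ 3 * phi t) t := by
  have hlt := exp_lt_one_of_pos ht
  have hE := hasDerivAt_E t
  set E := Real.exp (-(2 * π * t)) with hEd
  have hne : 1 - E ≠ 0 := by linarith
  have h1 : HasDerivAt (fun t : ℝ => 1 - Real.exp (-(2 * π * t))) (2 * π * E) t := by
    convert! hE.const_sub 1 using 1; ring
  have hs := (hasDerivAt_id t).div h1 hne
  have hL := h1.log hne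
  have h := hL.sub (((((hs.pow 3).const_mul (8 * π ^ 3)).mul (hE.mul (hE.const_add 1))).add
    (((hs.pow 2).const_mul (12 * π ^ 2)).mul hE)).add
    ((hs.const_mul (12 * π)).mul hE) |>.const_mul (1 / 6))
  refine (h.congr_deriv ?_)
  simp only [phi, abs_of_pos ht, ← hEd, Pi.div_apply, Pi.mul_apply, Pi.pow_apply, id]
  push_cast
  field_simp
  ring

lemma tendsto_Phi_atTop : Tendsto Phi atTop (𝓝 0) := by
  have hpi := Real.pi_pos
  have key (k : ℕ) : Tendsto (fun t : ℝ => t ^ k * Real.exp (-(2 * π * t))) atTop (𝓝 0) := by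
    have h := Real.tendsto_pow_mul_exp_neg_atTop_nhds_zero k
    refine squeeze_zero' ?_ ?_ h
    · filter_upwards [eventually_ge_atTop 0] with t ht
      positivity
    · filter_upwards [eventually_ge_atTop 0] with t ht
      gcongr
      nlinarith [Real.pi_gt_three]
  have h0 : Tendsto (fun t : ℝ => Real.exp (-(2 * π * t))) atTop (𝓝 0) := by
    simpa using key 0
  have h1 : Tendsto (fun t : ℝ => 1 - Real.exp (-(2 * π * t))) atTop (𝓝 1) := by
    simpa using h0.const_sub 1
  have hi : Tendsto (fun t : ℝ => (1 - Real.exp (-(2 * π * t)))⁻¹) atTop (𝓝 1) := by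
    simpa using h1.inv₀ one_ne_zero
  have hL : Tendsto (fun t : ℝ => Real.log (1 - Real.exp (-(2 * π * t)))) atTop (𝓝 0) := by
    simpa using h1.log one_ne_zero
  have h := hL.sub ((((((key 3).mul (hi.pow 3)).mul (h0.const_add 1)).const_mul (8 * π ^ 3)).add
    (((key 2).mul (hi.pow 2)).const_mul (12 * π ^ 2))).add
    (((key 1).mul hi).const_mul (12 * π)) |>.const_mul (1 / 6))
  refine (h.congr fun t => ?_).trans (by simp)
  simp only [Phi]
  ring

lemma tendsto_Phi_sub_log :
    Tendsto (fun t => Phi t - Real.log t) (𝓝[>] 0) (𝓝 (-(11 / 6) + Real.log (2 * π))) := by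
  have hpi := Real.pi_pos
  have hE0 : Tendsto (fun t : ℝ => Real.exp (-(2 * π * t))) (𝓝[>] 0) (𝓝 1) := by
    have := (hasDerivAt_E 0).continuousAt.tendsto
    simp only [mul_zero, neg_zero, Real.exp_zero] at this
    exact this.mono_left nhdsWithin_le_nhds
  have hsl : Tendsto (fun t : ℝ => (1 - Real.exp (-(2 * π * t))) / t) (𝓝[>] 0) (𝓝 (2 * π)) := by
    have h := (hasDerivAt_iff_tendsto_slope.1 (hasDerivAt_E 0)).neg
    simp only [mul_zero, neg_zero, Real.exp_zero, mul_one, neg_neg] at h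
    refine (h.mono_left (nhdsWithin_mono _ fun x hx => ne_of_gt hx)).congr fun t => ?_
    simp [slope_def_field]
    ring
  have hs : Tendsto (fun t : ℝ => t / (1 - Real.exp (-(2 * π * t)))) (𝓝[>] 0)
      (𝓝 (2 * π)⁻¹) := by
    refine (hsl.inv₀ (by positivity)).congr fun t => ?_
    rw [inv_div]
  have hL := hsl.log (by positivity : 2 * π ≠ 0)
  have h := hL.sub (((((hs.pow 3).const_mul (8 * π ^ 3)).mul (hE0.mul (hE0.const_add 1))).add
    (((hs.pow 2).const_mul (12 * π ^ 2)).mul hE0)).add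
    ((hs.const_mul (12 * π)).mul hE0) |>.const_mul (1 / 6))
  have hval : Real.log (2 * π) - 1 / 6 * (8 * π ^ 3 * (2 * π)⁻¹ ^ 3 * (1 * (1 + 1))
      + 12 * π ^ 2 * (2 * π)⁻¹ ^ 2 * 1 + 12 * π * (2 * π)⁻¹ * 1)
      = -(11 / 6) + Real.log (2 * π) := by
    field_simp; ring
  rw [hval] at h
  refine h.congr' ?_
  filter_upwards [self_mem_nhdsWithin] with t ht
  have ht : 0 < t := ht
  have hlt := exp_lt_one_of_pos ht
  rw [Real.log_div (by linarith) ht.ne']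
  simp only [Phi]
  ring

open MeasureTheory Set in
/-- Fundamental theorem of calculus on `(0, ∞)` with a limit at each end. -/
lemma integral_Ioi_of_limits {f f' : ℝ → ℝ} {l m : ℝ}
    (hderiv : ∀ x, 0 < x → HasDerivAt f (f' x) x) (hint : IntegrableOn f' (Ioi 0))
    (h0 : Tendsto f (𝓝[>] 0) (𝓝 l)) (h1 : Tendsto f atTop (𝓝 m)) :
    ∫ x in Ioi 0, f' x = m - l := by
  have h := integral_Ioi_of_hasDerivAt_of_tendsto (f := Function.update f 0 l) (f' := f') (a := 0)
    (m := m) ?_ ?_ hint ?_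
  · simpa using h
  · rw [continuousWithinAt_update_same]
    refine h0.mono_left (nhdsWithin_mono _ ?_)
    intro x hx
    exact lt_of_le_of_ne hx.1 (Ne.symm hx.2)
  · intro x hx
    refine (hderiv x hx).congr_of_eventuallyEq ?_
    filter_upwards [eventually_ne_nhds (ne_of_gt hx)] with z hz
    simp [hz]
  · refine h1.congr' ?_
    filter_upwards [eventually_ne_atTop 0] with z hz
    simp [hz]

namespace DetMat

/-- Closed form, for `n ≠ 0` and `y > 0`, of minus the contribution of the matrices with a zero entry,
multiplied by `n⁴y³`. -/
def degenerate (n : ℤ) (y : ℝ) : ℝ :=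
  ∑ p ∈ Int.divisorsAntidiag n,
    (-2 * ((p.1 : ℝ) ^ 4 * y ^ 3 * phi (p.1 * y)) - 2 * ((p.1 : ℝ) ^ 4 * y⁻¹ ^ 5 * phi (p.1 * y⁻¹))
      + 2 * y⁻¹)

lemma generic_eq_degenerate {n : ℤ} (hn : n ≠ 0) {y : ℝ} (hy : 0 < y) :
    (n : ℂ) ^ 4 * (y : ℂ) ^ 3 * generic n y = degenerate n y := by
  have hyc : (y : ℂ) ≠ 0 := by exact_mod_cast hy.ne'
  have hnc : (n : ℂ) ≠ 0 := by exact_mod_cast hn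
  have key {z : ℝ} (hz : 0 < z) : (n : ℂ) ^ 4 * lowerZero n z
      = ∑ p ∈ Int.divisorsAntidiag n, (p.1 : ℂ) ^ 4 * (phi (p.1 * z) : ℂ) := by
    rw [lowerZero_eq hn hz, Finset.mul_sum]
    refine Finset.sum_congr rfl fun p hp => ?_
    obtain ⟨h, h1, h2⟩ := mem_dA hp
    have h2' : (p.2 : ℂ) ≠ 0 := by exact_mod_cast h2
    rw [tsum_lin hz h1, ← h]
    push_cast
    field_simp
  rw [generic_eq hn hy, diagSum_eq hn]
  have e : (n : ℂ) ^ 4 * (y : ℂ) ^ 3 * (-2 * lowerZero n y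
      - 2 * ((y : ℂ)⁻¹ ^ 8 * lowerZero n y⁻¹)
      + 2 * ((Int.divisorsAntidiag n).card * ((n : ℂ)⁻¹ ^ 4 * (y : ℂ)⁻¹ ^ 4)))
      = -2 * y ^ 3 * ((n : ℂ) ^ 4 * lowerZero n y)
        - 2 * (y : ℂ)⁻¹ ^ 5 * ((n : ℂ) ^ 4 * lowerZero n y⁻¹)
        + (Int.divisorsAntidiag n).card * (2 * (y : ℂ)⁻¹) := by
    field_simp
  rw [e, key hy, key (inv_pos.2 hy), degenerate, Finset.mul_sum, Finset.mul_sum, ← nsmul_eq_mul,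
    ← Finset.sum_const, ← Finset.sum_sub_distrib, ← Finset.sum_add_distrib]
  push_cast
  refine Finset.sum_congr rfl fun p _ => ?_
  ring

open MeasureTheory Set in
/-- The antiderivatives of the three pieces diverge logarithmically at one end each; the divergences
cancel in the sum. -/
lemma integral_degenerate {n : ℤ} (hint : IntegrableOn (degenerate n) (Ioi 0)) :
    ∫ y in Ioi 0, degenerate n y
      = ∑ p ∈ Int.divisorsAntidiag n, 4 * (-(11 / 6) + Real.log (2 * π) + Real.log |(p.1 : ℝ)|) := by
  have hpos {p : ℤ × ℤ} (hp : p ∈ Int.divisorsAntidiag n) : 0 < |(p.1 : ℝ)| := by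
    have := (mem_dA hp).2.1
    positivity
  have hphi (p : ℤ × ℤ) {y : ℝ} : phi (p.1 * y) = phi (|(p.1 : ℝ)| * y) := by
    simp [phi, abs_mul]
  -- `W` is an antiderivative of `degenerate n` on `(0, ∞)`.
  let W (y : ℝ) : ℝ := ∑ p ∈ Int.divisorsAntidiag n,
    (-2 * Phi (|(p.1 : ℝ)| * y) + 2 * Phi (|(p.1 : ℝ)| * y⁻¹) + 2 * Real.log y)
  have hW : ∀ y, 0 < y → HasDerivAt W (degenerate n y) y := by
    intro y hy
    refine HasDerivAt.fun_sum fun p hp => ?_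
    have ha := hpos hp
    have d1 : HasDerivAt (fun y : ℝ => |(p.1 : ℝ)| * y) |(p.1 : ℝ)| y := by
      simpa using (hasDerivAt_id y).const_mul |(p.1 : ℝ)|
    have d2 : HasDerivAt (fun y : ℝ => |(p.1 : ℝ)| * y⁻¹) (|(p.1 : ℝ)| * (-(y ^ 2)⁻¹)) y :=
      (hasDerivAt_inv hy.ne').const_mul _
    have e1 := (hasDerivAt_Phi (mul_pos ha hy)).comp y d1
    have e2 := (hasDerivAt_Phi (mul_pos ha (inv_pos.2 hy))).comp y d2
    have h := ((e1.const_mul (-2)).add (e2.const_mul 2)).add ((Real.hasDerivAt_log hy.ne').const_mul 2)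
    refine h.congr_deriv ?_
    rw [hphi, hphi, show (p.1 : ℝ) ^ 4 = |(p.1 : ℝ)| ^ 4 from (Even.pow_abs (by decide) _).symm]
    field_simp
    ring
  have hlim {p : ℤ × ℤ} (hp : p ∈ Int.divisorsAntidiag n) :
      Tendsto (fun y : ℝ => Phi (|(p.1 : ℝ)| * y) - Real.log y) (𝓝[>] 0)
        (𝓝 (-(11 / 6) + Real.log (2 * π) + Real.log |(p.1 : ℝ)|)) := by
    have ha := hpos hp
    have h1 : Tendsto (fun y : ℝ => |(p.1 : ℝ)| * y) (𝓝[>] 0) (𝓝[>] 0) := by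
      refine tendsto_nhdsWithin_iff.2 ⟨?_, ?_⟩
      · have : Tendsto (fun y : ℝ => |(p.1 : ℝ)| * y) (𝓝 0) (𝓝 (|(p.1 : ℝ)| * 0)) :=
          (continuous_const.mul continuous_id).tendsto 0
        rw [mul_zero] at this
        exact this.mono_left nhdsWithin_le_nhds
      · filter_upwards [self_mem_nhdsWithin] with y hy
        exact mul_pos ha hy
    refine ((tendsto_Phi_sub_log.comp h1).add_const (Real.log |(p.1 : ℝ)|)).congr' ?_
    filter_upwards [self_mem_nhdsWithin] with y hy
    have hy : 0 < y := hy
    simp only [Function.comp]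
    rw [Real.log_mul ha.ne' hy.ne']
    ring
  have hinf {p : ℤ × ℤ} (hp : p ∈ Int.divisorsAntidiag n) :
      Tendsto (fun y : ℝ => Phi (|(p.1 : ℝ)| * y)) atTop (𝓝 0) :=
    tendsto_Phi_atTop.comp (tendsto_id.const_mul_atTop (hpos hp))
  have h1 : Tendsto W atTop (𝓝 (∑ p ∈ Int.divisorsAntidiag n,
      2 * (-(11 / 6) + Real.log (2 * π) + Real.log |(p.1 : ℝ)|))) := by
    refine tendsto_finsetSum _ fun p hp => ?_
    have := ((hinf hp).const_mul (-2)).add (((hlim hp).comp tendsto_inv_atTop_nhdsGT_zero).const_mul 2)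
    rw [mul_zero, zero_add] at this
    refine this.congr fun y => ?_
    simp only [Function.comp, Real.log_inv]
    ring
  have h0 : Tendsto W (𝓝[>] 0) (𝓝 (∑ p ∈ Int.divisorsAntidiag n,
      -2 * (-(11 / 6) + Real.log (2 * π) + Real.log |(p.1 : ℝ)|))) := by
    refine tendsto_finsetSum _ fun p hp => ?_
    have := ((hlim hp).const_mul (-2)).add (((hinf hp).comp tendsto_inv_nhdsGT_zero).const_mul 2)
    rw [mul_zero, add_zero] at this
    refine this.congr fun y => ?_
    simp only [Function.comp]
    ring
  rw [integral_Ioi_of_limits hW hint h0 h1, ← Finset.sum_sub_distrib]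
  refine Finset.sum_congr rfl fun p _ => ?_
  ring

end DetMat

end

section

open Topology MeasureTheory Set

/-! ### The integral attached to a matrix without zero entries -/

namespace DetMat

variable {n : ℤ}

/-- The rational part of an antiderivative of `(ds - b)³ (a - cs)³ s⁻⁴` in the variable `s`. -/
def laurent (a b c d s : ℂ) : ℂ :=
  -(-(a ^ 3 * b ^ 3)) / 3 * s⁻¹ ^ 3
    - (3 * d * b ^ 2 * a ^ 3 + 3 * a ^ 2 * c * b ^ 3) / 2 * s⁻¹ ^ 2
    - (-(3 * d ^ 2 * b * a ^ 3) - 9 * d * b ^ 2 * a ^ 2 * c - 3 * a * c ^ 2 * b ^ 3) * s⁻¹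
    + (-(3 * d ^ 3 * a ^ 2 * c) - 9 * d ^ 2 * b * a * c ^ 2 - 3 * d * b ^ 2 * c ^ 3) * s
    + (3 * d ^ 3 * a * c ^ 2 + 3 * d ^ 2 * b * c ^ 3) / 2 * s ^ 2
    + (-(d ^ 3 * c ^ 3)) / 3 * s ^ 3

/-- The coefficient of `s⁻¹` in `(ds - b)³ (a - cs)³ s⁻⁴`. -/
def logCoeff (a b c d : ℝ) : ℝ :=
  a ^ 3 * d ^ 3 + 9 * a ^ 2 * d ^ 2 * b * c + 9 * a * d * b ^ 2 * c ^ 2 + b ^ 3 * c ^ 3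

/-- The real weight-`8` summand, multiplied by `y³`. -/
def kernel (m : DetMat n) (y : ℝ) : ℝ := y ^ 3 * (m.term y).re

/-- Evaluated at the quotient `X / Y` of the two linear forms, this is an antiderivative of
`n⁷ · kernel`. Only `log ‖s‖` occurs since the real part is taken, so it is continuous at every
nonzero `s`. -/
def primitive (m : DetMat n) (s : ℂ) : ℝ :=
  (laurent m.a m.b m.c m.d s).re + logCoeff m.a m.b m.c m.d * Real.log ‖s‖

lemma hasDerivAt_lin (a b : ℤ) (y : ℝ) : HasDerivAt (fun y : ℝ => lin y a b) (a * Complex.I) y := by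
  have h : HasDerivAt (fun y : ℝ => (y : ℂ)) 1 y := Complex.ofRealCLM.hasDerivAt
  have := ((h.const_mul Complex.I).const_mul (a : ℂ)).add_const (b : ℂ)
  simpa [lin] using this

lemma lin_mem_slitPlane {y : ℝ} (hy : 0 < y) {a : ℤ} (ha : a ≠ 0) (b : ℤ) :
    lin y a b ∈ Complex.slitPlane := by
  refine Or.inr ?_
  rw [lin_im]
  have : (a : ℝ) ≠ 0 := by exact_mod_cast ha
  positivity

/-- With `x = az + b`, `y = cz + d` and `s = x / y` one has `(ds - b) / (a - cs) = z`, so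
`(ds - b)³ (a - cs)³ s⁻⁴ ds` is `(ad - bc)⁷ z³ x⁻⁴ y⁻⁴ dz`. Here `i` is the derivative of `z`. -/
lemma laurent_deriv_identity {a c x y z i : ℂ} (hx : x ≠ 0) (hy : y ≠ 0) :
    let b := x - a * z
    let d := y - c * z
    let s := x / y
    let s' := (a * i * y - x * (c * i)) / y ^ 2
    (-(-(a ^ 3 * b ^ 3)) / 3 * (3 * s⁻¹ ^ 2 * (-s' / s ^ 2))
    - (3 * d * b ^ 2 * a ^ 3 + 3 * a ^ 2 * c * b ^ 3) / 2 * (2 * s⁻¹ * (-s' / s ^ 2))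
    - (-(3 * d ^ 2 * b * a ^ 3) - 9 * d * b ^ 2 * a ^ 2 * c - 3 * a * c ^ 2 * b ^ 3) * (-s' / s ^ 2)
    + (-(3 * d ^ 3 * a ^ 2 * c) - 9 * d ^ 2 * b * a * c ^ 2 - 3 * d * b ^ 2 * c ^ 3) * s'
    + (3 * d ^ 3 * a * c ^ 2 + 3 * d ^ 2 * b * c ^ 3) / 2 * (2 * s * s')
    + (-(d ^ 3 * c ^ 3)) / 3 * (3 * s ^ 2 * s'))
    + (a ^ 3 * d ^ 3 + 9 * a ^ 2 * d ^ 2 * b * c + 9 * a * d * b ^ 2 * c ^ 2 + b ^ 3 * c ^ 3)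
      * (a * i / x - c * i / y)
    = (a * d - b * c) ^ 7 * (i * z ^ 3 * (x⁻¹ ^ 4 * y⁻¹ ^ 4)) := by
  intro b d s s'
  have hn : a * d - b * c = a * y - x * c := by simp only [b, d]; ring
  have hs : s ≠ 0 := div_ne_zero hx hy
  -- In terms of `s`, the left side is `(ds - b)³ (a - cs)³ s⁻⁴ s'`.
  have h1 : a * i / x - c * i / y = s' / s := by
    simp only [s, s']; field_simp
  have h2 : d * s - b = z * (a * y - x * c) / y := by
    simp only [s, b, d]; field_simp; ring
  have h3 : a - c * s = (a * y - x * c) / y := by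
    simp only [s]; field_simp
  have h4 : s' = i * (a * y - x * c) / y ^ 2 := by simp only [s']; ring
  trans (d * s - b) ^ 3 * (a - c * s) ^ 3 * s⁻¹ ^ 4 * s'
  · rw [h1]
    clear_value s s' b d
    field_simp
    ring
  · rw [h2, h3, h4, hn]
    simp only [s]
    field_simp

lemma hasDerivAt_primitive (hn : n ≠ 0) (m : DetMat n) (ha : m.a ≠ 0) (hc : m.c ≠ 0)
    {y : ℝ} (hy : 0 < y) :
    HasDerivAt (fun y => m.primitive (m.X y / m.Y y)) ((n : ℝ) ^ 7 * m.kernel y) y := by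
  have hX := m.X_ne hn hy
  have hY := m.Y_ne hn hy
  have dX : HasDerivAt m.X (m.a * Complex.I) y := hasDerivAt_lin m.a m.b y
  have dY : HasDerivAt m.Y (m.c * Complex.I) y := hasDerivAt_lin m.c m.d y
  have ds : HasDerivAt (fun y => m.X y / m.Y y) _ y := dX.div dY hY
  have di := ds.inv (div_ne_zero hX hY)
  have dL := (dX.clog_real (lin_mem_slitPlane hy ha m.b)).sub
    (dY.clog_real (lin_mem_slitPlane hy hc m.d))
  have h := (((((((di.pow 3).const_mul (-(-((m.a : ℂ) ^ 3 * m.b ^ 3)) / 3)).sub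
    ((di.pow 2).const_mul (((3 : ℂ) * m.d * m.b ^ 2 * m.a ^ 3 + 3 * m.a ^ 2 * m.c * m.b ^ 3) / 2))).sub
    (di.const_mul (-((3 : ℂ) * m.d ^ 2 * m.b * m.a ^ 3) - 9 * m.d * m.b ^ 2 * m.a ^ 2 * m.c
      - 3 * m.a * m.c ^ 2 * m.b ^ 3))).add
    (ds.const_mul (-((3 : ℂ) * m.d ^ 3 * m.a ^ 2 * m.c) - 9 * m.d ^ 2 * m.b * m.a * m.c ^ 2
      - 3 * m.d * m.b ^ 2 * m.c ^ 3))).add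
    ((ds.pow 2).const_mul (((3 : ℂ) * m.d ^ 3 * m.a * m.c ^ 2 + 3 * m.d ^ 2 * m.b * m.c ^ 3) / 2))).add
    ((ds.pow 3).const_mul ((-((m.d : ℂ) ^ 3 * m.c ^ 3)) / 3))).add
    (dL.const_mul (logCoeff m.a m.b m.c m.d : ℂ))
  have hre := Complex.reCLM.hasFDerivAt.comp_hasDerivAt y h
  have hval : ((n : ℝ) ^ 7 * m.kernel y) = ((n : ℂ) ^ 7 * (Complex.I * (Complex.I * y) ^ 3 *
      ((m.X y)⁻¹ ^ 4 * (m.Y y)⁻¹ ^ 4))).re := by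
    have e : (n : ℂ) ^ 7 * (Complex.I * (Complex.I * y) ^ 3 *
      ((m.X y)⁻¹ ^ 4 * (m.Y y)⁻¹ ^ 4)) = (((n : ℝ) ^ 7 * y ^ 3 : ℝ) : ℂ) * m.term y := by
      rw [term]; push_cast
      linear_combination ((n : ℂ) ^ 7 * y ^ 3 *
        ((m.X y)⁻¹ ^ 4 * (m.Y y)⁻¹ ^ 4)) * Complex.I_pow_four
    rw [e, Complex.re_ofReal_mul, kernel]
    ring
  rw [hval]
  refine (hre.congr_of_eventuallyEq ?_).congr_deriv ?_
  · filter_upwards [eventually_gt_nhds hy] with z hz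
    have hX := m.X_ne hn hz
    have hY := m.Y_ne hn hz
    simp only [primitive, laurent, Function.comp, Complex.reCLM_apply, Pi.add_apply, Pi.sub_apply,
      Pi.pow_apply, Pi.inv_apply, Complex.add_re, Complex.re_ofReal_mul,
      Complex.sub_re, Complex.log_re]
    rw [norm_div, Real.log_div (norm_ne_zero_iff.2 hX) (norm_ne_zero_iff.2 hY)]
  · rw [Complex.reCLM_apply]
    congr 1
    have hb : (m.b : ℂ) = m.X y - m.a * (Complex.I * y) := by simp [X, lin]
    have hd : (m.d : ℂ) = m.Y y - m.c * (Complex.I * y) := by simp [Y, lin]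
    have hdet : (n : ℂ) = m.a * m.d - m.b * m.c := by exact_mod_cast m.det.symm
    have key := laurent_deriv_identity (a := m.a) (c := m.c) (z := Complex.I * y) (i := Complex.I) hX hY
    simp only [← hb, ← hd, ← hdet] at key
    rw [← key]
    simp only [logCoeff]
    push_cast
    simp only [pow_one]
    rfl

lemma tendsto_lin_zero (a b : ℤ) : Tendsto (fun y => lin y a b) (𝓝[>] 0) (𝓝 b) := by
  have := (hasDerivAt_lin a b 0).continuousAt.tendsto
  simp only [lin, Complex.ofReal_zero, mul_zero, zero_add] at this
  exact this.mono_left nhdsWithin_le_nhds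

lemma continuousAt_primitive (m : DetMat n) {s : ℂ} (hs : s ≠ 0) : ContinuousAt m.primitive s := by
  have hs' : ‖s‖ ≠ 0 := norm_ne_zero_iff.2 hs
  unfold primitive laurent
  refine ContinuousAt.add (Complex.continuous_re.continuousAt.comp ?_) (continuousAt_const.mul
    (ContinuousAt.log continuous_norm.continuousAt hs'))
  fun_prop (disch := assumption)

lemma tendsto_primitive_zero (m : DetMat n) (hb : m.b ≠ 0) (hd : m.d ≠ 0) :
    Tendsto (fun y => m.primitive (m.X y / m.Y y)) (𝓝[>] 0) (𝓝 (m.primitive (m.b / m.d))) := by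
  have hb' : (m.b : ℂ) ≠ 0 := by exact_mod_cast hb
  have hd' : (m.d : ℂ) ≠ 0 := by exact_mod_cast hd
  exact (m.continuousAt_primitive (div_ne_zero hb' hd')).tendsto.comp
    ((tendsto_lin_zero m.a m.b).div (tendsto_lin_zero m.c m.d) hd')

lemma tendsto_primitive_atTop (m : DetMat n) (ha : m.a ≠ 0) (hc : m.c ≠ 0) :
    Tendsto (fun y => m.primitive (m.X y / m.Y y)) atTop (𝓝 (m.primitive (m.a / m.c))) := by
  have ha' : (m.a : ℂ) ≠ 0 := by exact_mod_cast ha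
  have hc' : (m.c : ℂ) ≠ 0 := by exact_mod_cast hc
  have h := (m.continuousAt_primitive (div_ne_zero ha' hc')).tendsto.comp
    (((tendsto_lin_zero (-m.b) m.a).div (tendsto_lin_zero (-m.d) m.c) hc').comp
      tendsto_inv_atTop_nhdsGT_zero)
  refine h.congr' ?_
  filter_upwards [eventually_gt_atTop 0] with y hy
  have hy' : (y : ℂ) ≠ 0 := by exact_mod_cast hy.ne'
  -- Passing from `y` to `1/y` reduces the limit at infinity to one at zero.
  have key (a b : ℤ) : lin y a b = Complex.I * y * lin y⁻¹ (-b) a := by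
    simp only [lin]; push_cast; field_simp; linear_combination (b : ℂ) * Complex.I_sq
  simp only [Function.comp, Pi.div_apply, X, Y, key m.a, key m.c]
  rw [mul_div_mul_left _ _ (mul_ne_zero Complex.I_ne_zero hy')]

/-- The boundary values at `y = ∞` and `y = 0` combine to the weight `ψ₁(ad, -bc)`. -/
lemma primitive_sub (hn : n ≠ 0) (m : DetMat n) (ha : m.a ≠ 0) (hb : m.b ≠ 0) (hc : m.c ≠ 0)
    (hd : m.d ≠ 0) :
    m.primitive (m.a / m.c) - m.primitive (m.b / m.d)
      = -((n : ℝ) ^ 3 / 3) * psi1 (m.a * m.d) (-(m.b * m.c)) := by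
  have hdet : (m.a : ℝ) * m.d - m.b * m.c = n := by exact_mod_cast m.det
  have hdetC : (m.a : ℂ) * m.d - m.b * m.c = n := by exact_mod_cast m.det
  have hnr : (n : ℝ) ≠ 0 := by exact_mod_cast hn
  have hL : laurent m.a m.b m.c m.d (m.a / m.c) - laurent m.a m.b m.c m.d (m.b / m.d)
      = ((-((n : ℝ) ^ 3 / 3) * 11 - 20 * n * (m.a * m.d * (m.b * m.c)) : ℝ) : ℂ) := by
    have ha' : (m.a : ℂ) ≠ 0 := by exact_mod_cast ha
    have hb' : (m.b : ℂ) ≠ 0 := by exact_mod_cast hb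
    have hc' : (m.c : ℂ) ≠ 0 := by exact_mod_cast hc
    have hd' : (m.d : ℂ) ≠ 0 := by exact_mod_cast hd
    push_cast
    rw [← hdetC]
    simp only [laurent]
    field_simp
    ring
  have hre := congrArg Complex.re hL
  rw [Complex.sub_re, Complex.ofReal_re] at hre
  have ha' : (m.a : ℝ) ≠ 0 := by exact_mod_cast ha
  have hb' : (m.b : ℝ) ≠ 0 := by exact_mod_cast hb
  have hc' : (m.c : ℝ) ≠ 0 := by exact_mod_cast hc
  have hd' : (m.d : ℝ) ≠ 0 := by exact_mod_cast hd
  have hlog : Real.log ‖(m.a : ℂ) / m.c‖ - Real.log ‖(m.b : ℂ) / m.d‖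
      = Real.log |(m.a * m.d : ℝ) / -(m.b * m.c)| := by
    simp only [norm_div, Complex.norm_intCast, abs_div, abs_mul, abs_neg]
    rw [Real.log_div, Real.log_div, Real.log_div, Real.log_mul, Real.log_mul]
    · ring
    all_goals positivity
  have hsum : (m.a * m.d : ℝ) + -(m.b * m.c) = n := by rw [← hdet]; ring
  simp only [primitive, psi1]
  push_cast
  rw [← hlog, hsum]
  set L₁ := Real.log ‖(m.a : ℂ) / m.c‖
  set L₂ := Real.log ‖(m.b : ℂ) / m.d‖
  have e : -((n : ℝ) ^ 3 / 3) * (11 - 60 * (m.a * m.d : ℝ) * -(m.b * m.c) / n ^ 2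
      - (3 * (m.a * m.d : ℝ) ^ 3 - 27 * (m.a * m.d : ℝ) ^ 2 * -(m.b * m.c)
        + 27 * (m.a * m.d) * (-(m.b * m.c)) ^ 2 - 3 * (-(m.b * m.c)) ^ 3) / n ^ 3 * (L₁ - L₂))
      = -((n : ℝ) ^ 3 / 3) * 11 - 20 * n * (m.a * m.d * (m.b * m.c))
        + logCoeff m.a m.b m.c m.d * (L₁ - L₂) := by
    simp only [logCoeff]
    field_simp
    ring
  rw [e]
  linear_combination hre

end DetMat

lemma hasDerivAt_majorant {C D : ℝ} (hC : 0 < C) (hD : 0 < D) (y : ℝ) :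
    HasDerivAt (fun y => -(2 * C * (C * y ^ 2 + D))⁻¹) (y / (C * y ^ 2 + D) ^ 2) y := by
  have hne : 2 * C * (C * y ^ 2 + D) ≠ 0 := by positivity
  have h := (((((hasDerivAt_pow 2 y).const_mul C).add_const D).const_mul (2 * C)).inv hne).neg
  refine h.congr_deriv ?_
  have : C * y ^ 2 + D ≠ 0 := by positivity
  simp
  field_simp
  try ring

lemma tendsto_majorant {C : ℝ} (hC : 0 < C) (D : ℝ) :
    Tendsto (fun y => -(2 * C * (C * y ^ 2 + D))⁻¹) atTop (𝓝 0) := by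
  rw [← neg_zero]
  refine (tendsto_inv_atTop_zero.comp ?_).neg
  refine Tendsto.const_mul_atTop (by positivity) (tendsto_atTop_add_const_right _ _ ?_)
  exact (tendsto_pow_atTop two_ne_zero).const_mul_atTop hC

lemma integrableOn_majorant {C D : ℝ} (hC : 0 < C) (hD : 0 < D) :
    IntegrableOn (fun y => y / (C * y ^ 2 + D) ^ 2) (Ioi 0) := by
  refine integrableOn_Ioi_deriv_of_nonneg (hasDerivAt_majorant hC hD 0).continuousAt.continuousWithinAt
    (fun y _ => hasDerivAt_majorant hC hD y) (fun y hy => ?_) (tendsto_majorant hC D)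
  have : (0 : ℝ) < y := hy
  positivity

lemma integral_majorant {C D : ℝ} (hC : 0 < C) (hD : 0 < D) :
    ∫ y in Ioi 0, y / (C * y ^ 2 + D) ^ 2 = (2 * C * D)⁻¹ := by
  rw [integral_Ioi_of_hasDerivAt_of_tendsto
    (hasDerivAt_majorant hC hD 0).continuousAt.continuousWithinAt
    (fun y _ => hasDerivAt_majorant hC hD y) (integrableOn_majorant hC hD) (tendsto_majorant hC D)]
  simp

namespace DetMat

variable {n : ℤ}

/-- The bound rests on `‖X‖²‖Y‖² ≥ (|ac| y² + |bd|)² ≥ 4 |ac| |bd| y²`. -/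
lemma norm_kernel_le (m : DetMat n) (ha : m.a ≠ 0) (hb : m.b ≠ 0) (hc : m.c ≠ 0)
    (hd : m.d ≠ 0) {y : ℝ} (hy : 0 < y) :
    ‖m.kernel y‖ ≤ (4 * |(m.a * m.c : ℝ)| * |(m.b * m.d : ℝ)|)⁻¹ *
      (y / (|(m.a * m.c : ℝ)| * y ^ 2 + |(m.b * m.d : ℝ)|) ^ 2) := by
  have ha' : (m.a : ℝ) ≠ 0 := by exact_mod_cast ha
  have hb' : (m.b : ℝ) ≠ 0 := by exact_mod_cast hb
  have hc' : (m.c : ℝ) ≠ 0 := by exact_mod_cast hc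
  have hd' : (m.d : ℝ) ≠ 0 := by exact_mod_cast hd
  have hC : 0 < |(m.a * m.c : ℝ)| := by positivity
  have hD : 0 < |(m.b * m.d : ℝ)| := by positivity
  have hCD : |(m.a * m.c : ℝ)| * |(m.b * m.d : ℝ)| = |(m.a * m.d : ℝ)| * |(m.b * m.c : ℝ)| := by
    simp only [abs_mul]; ring
  have hP : (|(m.a * m.c : ℝ)| * y ^ 2 + |(m.b * m.d : ℝ)|) ^ 2 ≤ ‖m.X y‖ ^ 2 * ‖m.Y y‖ ^ 2 := by
    rw [X, Y, norm_lin_sq, norm_lin_sq]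
    have e : (((m.a : ℝ) * y) ^ 2 + (m.b : ℝ) ^ 2) * ((m.c * y) ^ 2 + (m.d : ℝ) ^ 2)
        = |(m.a * m.c : ℝ)| ^ 2 * y ^ 4 + (|(m.a * m.d : ℝ)| ^ 2 + |(m.b * m.c : ℝ)| ^ 2) * y ^ 2
          + |(m.b * m.d : ℝ)| ^ 2 := by
      simp only [sq_abs]; ring
    have := mul_nonneg (sq_nonneg (|(m.a * m.d : ℝ)| - |(m.b * m.c : ℝ)|)) (sq_nonneg y)
    rw [e]
    linear_combination this + 2 * y ^ 2 * hCD
  set C := |(m.a * m.c : ℝ)|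
  set D := |(m.b * m.d : ℝ)|
  have hS : 0 < C * y ^ 2 + D := by positivity
  have h4 : 4 * C * D * y ^ 2 ≤ (C * y ^ 2 + D) ^ 2 := by
    linear_combination sq_nonneg (C * y ^ 2 - D)
  have hPP : 4 * C * D * y ^ 2 * (C * y ^ 2 + D) ^ 2 ≤ ‖m.X y‖ ^ 4 * ‖m.Y y‖ ^ 4 := by
    calc 4 * C * D * y ^ 2 * (C * y ^ 2 + D) ^ 2
        ≤ (‖m.X y‖ ^ 2 * ‖m.Y y‖ ^ 2) * (‖m.X y‖ ^ 2 * ‖m.Y y‖ ^ 2) := by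
          exact mul_le_mul (h4.trans hP) hP (by positivity) (by positivity)
      _ = _ := by ring
  have h1 : ‖m.kernel y‖ ≤ y ^ 3 * (‖m.X y‖ ^ 4 * ‖m.Y y‖ ^ 4)⁻¹ := by
    rw [kernel, norm_mul, Real.norm_of_nonneg (by positivity)]
    gcongr
    refine (Complex.abs_re_le_norm _).trans (le_of_eq ?_)
    simp [term, mul_comm]
  refine h1.trans ?_
  calc y ^ 3 * (‖m.X y‖ ^ 4 * ‖m.Y y‖ ^ 4)⁻¹
      ≤ y ^ 3 * (4 * C * D * y ^ 2 * (C * y ^ 2 + D) ^ 2)⁻¹ := by gcongr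
    _ = _ := by field_simp

lemma continuousOn_kernel (hn : n ≠ 0) (m : DetMat n) : ContinuousOn m.kernel (Ioi 0) := by
  intro y hy
  have hX := m.X_ne hn hy
  have hY := m.Y_ne hn hy
  have cX : ContinuousAt m.X y := (hasDerivAt_lin m.a m.b y).continuousAt
  have cY : ContinuousAt m.Y y := (hasDerivAt_lin m.c m.d y).continuousAt
  refine ContinuousAt.continuousWithinAt ?_
  unfold kernel term
  exact (continuousAt_id.pow 3).mul (Complex.continuous_re.continuousAt.comp
    (((cX.inv₀ hX).pow 4).mul ((cY.inv₀ hY).pow 4)))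

lemma integrableOn_kernel (hn : n ≠ 0) (m : DetMat n) (ha : m.a ≠ 0) (hb : m.b ≠ 0) (hc : m.c ≠ 0)
    (hd : m.d ≠ 0) : IntegrableOn m.kernel (Ioi 0) := by
  have ha' : (m.a : ℝ) ≠ 0 := by exact_mod_cast ha
  have hb' : (m.b : ℝ) ≠ 0 := by exact_mod_cast hb
  have hc' : (m.c : ℝ) ≠ 0 := by exact_mod_cast hc
  have hd' : (m.d : ℝ) ≠ 0 := by exact_mod_cast hd
  refine Integrable.mono' ((integrableOn_majorant (C := |(m.a * m.c : ℝ)|)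
      (D := |(m.b * m.d : ℝ)|) (by positivity) (by positivity)).const_mul
      (4 * |(m.a * m.c : ℝ)| * |(m.b * m.d : ℝ)|)⁻¹)
    ((m.continuousOn_kernel hn).aestronglyMeasurable measurableSet_Ioi) ?_
  filter_upwards [ae_restrict_mem measurableSet_Ioi] with y hy
  exact m.norm_kernel_le ha hb hc hd hy

lemma integral_norm_kernel_le (hn : n ≠ 0) (m : DetMat n) (ha : m.a ≠ 0) (hb : m.b ≠ 0)
    (hc : m.c ≠ 0) (hd : m.d ≠ 0) :
    ∫ y in Ioi 0, ‖m.kernel y‖ ≤ ((m.a : ℝ) ^ 2)⁻¹ * ((m.b : ℝ) ^ 2)⁻¹ * ((m.c : ℝ) ^ 2)⁻¹ *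
      ((m.d : ℝ) ^ 2)⁻¹ := by
  have ha' : (m.a : ℝ) ≠ 0 := by exact_mod_cast ha
  have hb' : (m.b : ℝ) ≠ 0 := by exact_mod_cast hb
  have hc' : (m.c : ℝ) ≠ 0 := by exact_mod_cast hc
  have hd' : (m.d : ℝ) ≠ 0 := by exact_mod_cast hd
  have hC : 0 < |(m.a * m.c : ℝ)| := by positivity
  have hD : 0 < |(m.b * m.d : ℝ)| := by positivity
  calc ∫ y in Ioi 0, ‖m.kernel y‖
      ≤ ∫ y in Ioi 0, (4 * |(m.a * m.c : ℝ)| * |(m.b * m.d : ℝ)|)⁻¹ *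
          (y / (|(m.a * m.c : ℝ)| * y ^ 2 + |(m.b * m.d : ℝ)|) ^ 2) :=
        setIntegral_mono_on (m.integrableOn_kernel hn ha hb hc hd).norm
          ((integrableOn_majorant hC hD).const_mul _) measurableSet_Ioi
          fun y hy => m.norm_kernel_le ha hb hc hd hy
    _ = (8 * (|(m.a * m.c : ℝ)| ^ 2 * |(m.b * m.d : ℝ)| ^ 2))⁻¹ := by
        rw [integral_const_mul, integral_majorant hC hD, ← mul_inv]
        congr 1
        ring
    _ ≤ (|(m.a * m.c : ℝ)| ^ 2 * |(m.b * m.d : ℝ)| ^ 2)⁻¹ := by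
        refine inv_anti₀ (by positivity) ?_
        have : 0 ≤ |(m.a * m.c : ℝ)| ^ 2 * |(m.b * m.d : ℝ)| ^ 2 := by positivity
        linarith
    _ = _ := by
        simp only [sq_abs]
        field_simp

lemma integral_kernel (hn : n ≠ 0) (m : DetMat n) (ha : m.a ≠ 0) (hb : m.b ≠ 0) (hc : m.c ≠ 0)
    (hd : m.d ≠ 0) :
    (n : ℝ) ^ 4 * ∫ y in Ioi 0, m.kernel y
      = -(1 / 3) * psi1 (m.a * m.d) (-(m.b * m.c)) := by
  have hnr : (n : ℝ) ≠ 0 := by exact_mod_cast hn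
  have h := integral_Ioi_of_limits (fun y hy => m.hasDerivAt_primitive hn ha hc hy)
    ((m.integrableOn_kernel hn ha hb hc hd).const_mul _) (m.tendsto_primitive_zero hb hd)
    (m.tendsto_primitive_atTop ha hc)
  rw [integral_const_mul, primitive_sub hn m ha hb hc hd] at h
  refine mul_left_cancel₀ (pow_ne_zero 3 hnr) ?_
  linear_combination h

end DetMat

/-! ### Summation over pairs of factorizations -/

namespace DetMat

variable {n : ℤ}

/-- Pairs of factorizations `ad = n₁`, `bc = n₁ - n`, indexed by `n₁`. They parametrize the
matrices of determinant `n` without zero entries. -/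
abbrev Factors (n : ℤ) : Type :=
  (k : ℤ) × {p : (ℤ × ℤ) × (ℤ × ℤ) //
    p ∈ Int.divisorsAntidiag k ×ˢ Int.divisorsAntidiag (k - n)}

/-- The matrix `(a, b; c, d)` attached to the factorizations `ad` and `bc`. -/
def ofFactors (i : Factors n) : DetMat n :=
  mk i.2.1.1.1 i.2.1.2.1 i.2.1.2.2 i.2.1.1.2 (by
    have h := Finset.mem_product.1 i.2.2
    rw [(mem_dA h.1).1, (mem_dA h.2).1]
    ring)

lemma ofFactors_ne (i : Factors n) :
    (ofFactors i).a ≠ 0 ∧ (ofFactors i).b ≠ 0 ∧ (ofFactors i).c ≠ 0 ∧ (ofFactors i).d ≠ 0 := by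
  have h := Finset.mem_product.1 i.2.2
  exact ⟨(mem_dA h.1).2.1, (mem_dA h.2).2.1, (mem_dA h.2).2.2, (mem_dA h.1).2.2⟩

lemma ofFactors_ad (i : Factors n) : (ofFactors i).a * (ofFactors i).d = i.1 :=
  (mem_dA (Finset.mem_product.1 i.2.2).1).1

lemma ofFactors_bc (i : Factors n) : (ofFactors i).b * (ofFactors i).c = i.1 - n :=
  (mem_dA (Finset.mem_product.1 i.2.2).2).1

lemma ofFactors_injective : Function.Injective (ofFactors (n := n)) := by
  intro i j e
  have hk : i.1 = j.1 := by rw [← ofFactors_ad, e, ofFactors_ad]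
  obtain ⟨k, ⟨⟨⟨a, d⟩, ⟨b, c⟩⟩, h⟩⟩ := i
  obtain ⟨k', ⟨⟨⟨a', d'⟩, ⟨b', c'⟩⟩, h'⟩⟩ := j
  dsimp only at hk
  subst hk
  have e1 := congrArg DetMat.a e
  have e2 := congrArg DetMat.b e
  have e3 := congrArg DetMat.c e
  have e4 := congrArg DetMat.d e
  simp only [ofFactors, mk_a, mk_b, mk_c, mk_d] at e1 e2 e3 e4
  subst e1 e2 e3 e4
  rfl

lemma mem_range_ofFactors {m : DetMat n}
    (h : m.a ≠ 0 ∧ m.b ≠ 0 ∧ m.c ≠ 0 ∧ m.d ≠ 0) : m ∈ Set.range ofFactors := by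
  obtain ⟨ha, hb, hc, hd⟩ := h
  refine ⟨⟨m.a * m.d, ⟨((m.a, m.d), (m.b, m.c)), ?_⟩⟩, ?_⟩
  · rw [Finset.mem_product, Int.mem_divisorsAntidiag, Int.mem_divisorsAntidiag]
    have : m.a * m.d - n = m.b * m.c := by linear_combination m.det
    rw [this]
    exact ⟨⟨rfl, mul_ne_zero ha hd⟩, ⟨rfl, mul_ne_zero hb hc⟩⟩
  · ext <;> rfl

lemma summable_inv_sq_int : Summable fun t : ℤ => ((t : ℝ) ^ 2)⁻¹ := by
  simpa [one_div] using (Real.summable_one_div_int_pow (p := 2)).2 one_lt_two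

lemma summable_integral_norm_kernel (hn : n ≠ 0) :
    Summable fun i : Factors n => ∫ y in Ioi 0, ‖(ofFactors i).kernel y‖ := by
  have s := summable_inv_sq_int
  have s4 := ((s.mul_of_nonneg s (fun _ => by positivity) (fun _ => by positivity)).mul_of_nonneg
    (s.mul_of_nonneg s (fun _ => by positivity) (fun _ => by positivity))
    (fun _ => by positivity) (fun _ => by positivity))
  have hinj : Function.Injective fun i : Factors n =>
      (((ofFactors i).a, (ofFactors i).b), ((ofFactors i).c, (ofFactors i).d)) := by
    intro i j e
    simp only [Prod.mk.injEq] at e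
    exact ofFactors_injective (DetMat.ext e.1.1 e.1.2 e.2.1 e.2.2)
  refine Summable.of_nonneg_of_le (fun _ => integral_nonneg fun _ => norm_nonneg _) (fun i => ?_)
    (s4.comp_injective hinj)
  obtain ⟨ha, hb, hc, hd⟩ := ofFactors_ne i
  refine ((ofFactors i).integral_norm_kernel_le hn ha hb hc hd).trans (le_of_eq ?_)
  simp only [Function.comp]
  ring

lemma hasSum_kernel (hn : n ≠ 0) {y : ℝ} (hy : 0 < y) :
    HasSum (fun i : Factors n => (n : ℝ) ^ 4 * (ofFactors i).kernel y) (degenerate n y) := by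
  have hs := (summable_term hn hy).comp_injective (ofFactors_injective (n := n))
  have hgen : generic n y = ∑' i : Factors n, (ofFactors i).term y := by
    rw [generic, ← (ofFactors_injective (n := n)).tsum_eq]
    · refine tsum_congr fun i => ?_
      rw [if_pos (ofFactors_ne i)]
    · intro m hm
      refine mem_range_ofFactors ?_
      by_contra h
      simp [h] at hm
  have h1 : HasSum (fun i : Factors n => (n : ℂ) ^ 4 * (y : ℂ) ^ 3 * (ofFactors i).term y)
      (degenerate n y : ℂ) := by
    rw [← generic_eq_degenerate hn hy, hgen]
    exact hs.hasSum.mul_left _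
  have h2 := Complex.hasSum_re h1
  rw [Complex.ofReal_re] at h2
  refine h2.congr_fun ?_
  intro i
  rw [kernel, ← mul_assoc, ← Complex.re_ofReal_mul]
  push_cast
  rfl

end DetMat

/-- Factorizations of `k` over `ℤ` come with two sign choices; both sides are `0` for `k = 0`. -/
lemma card_divisorsAntidiag (k : ℤ) : (Int.divisorsAntidiag k).card = 2 * sigmaZ 0 k := by
  have h (m : ℕ) : m.divisorsAntidiagonal.card = m.divisors.card := by
    rw [← Nat.map_div_right_divisors, Finset.card_map]
  rcases k with m | m
  · simp only [Int.divisorsAntidiag, Finset.card_disjUnion, Finset.card_map, h, sigmaZ]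
    simp [two_mul]
  · simp only [Int.divisorsAntidiag, Finset.card_disjUnion, Finset.card_map, h, sigmaZ]
    simp [two_mul]

namespace DetMat

variable {n : ℤ}

lemma measurable_degenerate (n : ℤ) : Measurable (degenerate n) := by
  have hphi : Measurable phi := by unfold phi; fun_prop
  unfold degenerate
  fun_prop

lemma integrableOn_degenerate (hn : n ≠ 0) : IntegrableOn (degenerate n) (Ioi 0) := by
  refine ⟨(measurable_degenerate n).aestronglyMeasurable, ?_⟩
  have hint (i : Factors n) : IntegrableOn (ofFactors i).kernel (Ioi 0) := by
    obtain ⟨ha, hb, hc, hd⟩ := ofFactors_ne i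
    exact (ofFactors i).integrableOn_kernel hn ha hb hc hd
  have hle : ∀ᵐ y ∂(volume.restrict (Ioi (0 : ℝ))),
      ‖degenerate n y‖ₑ ≤ ∑' i : Factors n, ‖(n : ℝ) ^ 4 * (ofFactors i).kernel y‖ₑ := by
    filter_upwards [ae_restrict_mem measurableSet_Ioi] with y hy
    rw [← (hasSum_kernel hn hy).tsum_eq]
    exact enorm_tsum_le_tsum_enorm
  refine (lintegral_mono_ae hle).trans_lt ?_
  rw [lintegral_tsum fun i => ((hint i).const_mul _).1.enorm]
  have e (i : Factors n) : ∫⁻ y in Ioi 0, ‖(n : ℝ) ^ 4 * (ofFactors i).kernel y‖ₑ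
      = ENNReal.ofReal ((n : ℝ) ^ 4 * ∫ y in Ioi 0, ‖(ofFactors i).kernel y‖) := by
    rw [← ofReal_integral_norm_eq_lintegral_enorm ((hint i).const_mul _), ← integral_const_mul]
    congr 2
    ext y
    rw [norm_mul, Real.norm_of_nonneg (show 0 ≤ (n : ℝ) ^ 4 by positivity)]
  simp only [e]
  exact ((summable_integral_norm_kernel hn).mul_left _).tsum_ofReal_lt_top

/-- Term-by-term integration of the expansion over matrices without zero entries. -/
lemma hasSum_psi1 (hn : n ≠ 0) :
    HasSum (fun i : Factors n => -(1 / 3) * psi1 i.1 (n - i.1)) (∫ y in Ioi 0, degenerate n y) := by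
  have h := hasSum_integral_of_summable_integral_norm (μ := volume.restrict (Ioi (0 : ℝ)))
    (F := fun (i : Factors n) y => (n : ℝ) ^ 4 * (ofFactors i).kernel y) (fun i => ?_) ?_
  · rw [setIntegral_congr_fun measurableSet_Ioi
      (g := degenerate n) fun y hy => (hasSum_kernel hn hy).tsum_eq] at h
    refine h.congr_fun fun i => ?_
    obtain ⟨ha, hb, hc, hd⟩ := ofFactors_ne i
    have h1 : ((ofFactors i).a * (ofFactors i).d : ℤ) = i.1 := ofFactors_ad i
    have h2 : -((ofFactors i).b * (ofFactors i).c : ℤ) = n - i.1 := by rw [ofFactors_bc]; ring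
    rw [integral_const_mul, (ofFactors i).integral_kernel hn ha hb hc hd, h1, h2]
  · obtain ⟨ha, hb, hc, hd⟩ := ofFactors_ne i
    exact ((ofFactors i).integrableOn_kernel hn ha hb hc hd).const_mul _
  · refine ((summable_integral_norm_kernel hn).mul_left ((n : ℝ) ^ 4)).congr fun i => ?_
    rw [← integral_const_mul]
    congr 1
    ext y
    rw [norm_mul, Real.norm_of_nonneg (show 0 ≤ (n : ℝ) ^ 4 by positivity)]

/-- Pairing `a` with its cofactor: `2 Σ log |a| = Σ log |n|` over the `2σ₀(n)` factorizations. -/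
lemma sum_log_abs (n : ℤ) : ∑ p ∈ Int.divisorsAntidiag n, Real.log |(p.1 : ℝ)|
    = sigmaZ 0 n * Real.log |(n : ℝ)| := by
  have hswap : ∑ p ∈ Int.divisorsAntidiag n, Real.log |(p.1 : ℝ)|
      = ∑ p ∈ Int.divisorsAntidiag n, Real.log |(p.2 : ℝ)| := by
    refine Finset.sum_nbij' Prod.swap Prod.swap ?_ ?_ ?_ ?_ ?_
    all_goals simp +contextual
  have hadd : ∑ p ∈ Int.divisorsAntidiag n, Real.log |(p.1 : ℝ)|
      + ∑ p ∈ Int.divisorsAntidiag n, Real.log |(p.2 : ℝ)|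
      = ∑ p ∈ Int.divisorsAntidiag n, Real.log |(n : ℝ)| := by
    rw [← Finset.sum_add_distrib]
    refine Finset.sum_congr rfl fun p hp => ?_
    obtain ⟨h, h1, h2⟩ := mem_dA hp
    have h1' : (p.1 : ℝ) ≠ 0 := by exact_mod_cast h1
    have h2' : (p.2 : ℝ) ≠ 0 := by exact_mod_cast h2
    rw [← Real.log_mul (abs_ne_zero.2 h1') (abs_ne_zero.2 h2'), ← abs_mul, ← h]
    push_cast
    rfl
  rw [Finset.sum_const, card_divisorsAntidiag, nsmul_eq_mul, ← hswap] at hadd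
  push_cast at hadd
  linear_combination hadd / 2

end DetMat

end

/-- The convolution sum identity for `σ₀` with weight `ψ₁`
(the case `r₁ = r₂ = 0`, `d = 3`). -/
theorem convolution_sigma0_d3 (n : ℤ) (hn : n ≠ 0) :
    ∑' n₁ : ℤ, (if n₁ = 0 ∨ n₁ = n then 0 else
        (sigmaZ 0 n₁ : ℝ) * (sigmaZ 0 (n - n₁) : ℝ) * psi1 n₁ (n - n₁))
      = (11 - 3 * Real.log (4 * Real.pi ^ 2 * |(n : ℝ)|)) * (sigmaZ 0 n : ℝ) := by
  have h := DetMat.hasSum_psi1 hn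
  have hfib := h.sigma fun k => hasSum_fintype _
  -- The fibre over `k` has `2σ₀(k) · 2σ₀(n - k)` elements; it is empty for `k = 0` and `k = n`.
  have hk (k : ℤ) : ∑ _q : {p : (ℤ × ℤ) × (ℤ × ℤ) //
      p ∈ Int.divisorsAntidiag k ×ˢ Int.divisorsAntidiag (k - n)}, -(1 / 3) * psi1 k (n - k)
      = -(4 / 3) * (if k = 0 ∨ k = n then 0 else
        (sigmaZ 0 k : ℝ) * (sigmaZ 0 (n - k) : ℝ) * psi1 k (n - k)) := by
    have hneg : sigmaZ 0 (k - n) = sigmaZ 0 (n - k) := by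
      rw [sigmaZ, sigmaZ, ← Int.natAbs_neg, neg_sub]
    rw [Finset.sum_const, Finset.card_univ, Fintype.card_coe, Finset.card_product,
      card_divisorsAntidiag, card_divisorsAntidiag, hneg, nsmul_eq_mul]
    split_ifs with h0
    · rcases h0 with rfl | rfl <;> simp [sigmaZ]
    · push_cast; ring
  simp only [hk] at hfib
  have hsum := hfib.tsum_eq
  rw [tsum_mul_left, DetMat.integral_degenerate (DetMat.integrableOn_degenerate hn), ← Finset.mul_sum,
    Finset.sum_add_distrib, DetMat.sum_log_abs n, Finset.sum_const, card_divisorsAntidiag,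
    nsmul_eq_mul] at hsum
  have hpi := Real.pi_pos
  have hn' : |(n : ℝ)| ≠ 0 := abs_ne_zero.2 (by exact_mod_cast hn)
  have hlog : Real.log (4 * π ^ 2 * |(n : ℝ)|) = 2 * Real.log (2 * π) + Real.log |(n : ℝ)| := by
    rw [Real.log_mul (by positivity) hn', show 4 * π ^ 2 = (2 * π) ^ 2 by ring, Real.log_pow]
    push_cast
    rfl
  rw [hlog]
  push_cast at hsum
  linear_combination -(3 / 4) * hsum

end
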